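/- arXiv:1711.02883 — 2 statements merged into one kernel-verified Lean document; each statement's English description precedes it below -/
import Mathlib

section
/- Let p, r be positive integers, let D_1, …, D_p be dictionaries (finite nonempty families of atoms), and let d : {1, …, p} × {1, …, r} → ℝ be the columnwise nearest-atom cost, d(i, j) = min_k c(j, D_i(:, k)) for a cost function c. Let ℓ_1, …, ℓ_p be nonnegative integers (lower bounds) with Σ_{i=1}^p ℓ_i ≤ r. Define an augmented instance with p + 1 dictionaries by setting D_{p+1} to be the concatenation of D_1, …, D_p, so that d(p+1, j) = min_{1 ≤ i ≤ p} d(i, j), and exact counts ℓ_1, …, ℓ_p, ℓ_{p+1} := r − Σ_{i=1}^p ℓ_i. Then the minimum of Σ_{j=1}^r d(τ(j), j) over labelings τ : {1, …, r} → {1, …, p} satisfying |τ^{-1}(i)| ≥ ℓ_i for every i equals the minimum of Σ_{j=1}^r d(τ'(j), j) over labelings τ' : {1, …, r} → {1, …, p+1} satisfying |τ'^{-1}(i)| = ℓ_i for every i ≤ p and |τ'^{-1}(p+1)| = r − Σ_{i=1}^p ℓ_i. In other words, the lower-bound variant of the multiple-dictionary selection problem is equivalent to an exact-count instance obtained by adjoining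 the concatenated dictionary. -/
/-!
Adjoining the concatenated dictionary lets the surplus columns of a labeling be absorbed. If `τ`
uses dictionary `i` at least `ℓ i` times, keep `ℓ i` of these columns and move the others to the
concatenation, which is at most as expensive on every column. Conversely, on each column the
concatenation costs exactly as much as the cheapest dictionary, so its columns can be handed back
at no cost, and this only enlarges the fibers of the other labels.
-/

open scoped Finset

section Infimum

variable {I R : Type*} {κ : I → Type*} {f : (Σ i, κ i) → R}

lemma bddBelow_range_sigma [Finite I] [Preorder R] [IsCodirectedOrder R] [Nonempty R]
    (hf : ∀ i, BddBelow (Set.range fun k => f ⟨i, k⟩)) : BddBelow (Set.range f) := by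
  rw [Set.range_sigma_eq_iUnion_range, ← Set.biUnion_univ, Set.finite_univ.bddBelow_biUnion]
  exact fun i _ => hf i

lemma ciInf_sigma [ConditionallyCompleteLattice R] [∀ i, Nonempty (κ i)]
    (hf : BddBelow (Set.range f)) : ⨅ s, f s = ⨅ i, ⨅ k, f ⟨i, k⟩ := by
  cases isEmpty_or_nonempty I
  · simp only [iInf_of_isEmpty]
  have : Nonempty (Σ i, κ i) := nonempty_sigma.2 ⟨Classical.arbitrary I, inferInstance⟩
  have hf_iUnion := Set.range_sigma_eq_iUnion_range f ▸ hf
  exact le_antisymm (le_ciInf fun i => le_ciInf fun k => ciInf_le hf ⟨i, k⟩)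
    (le_ciInf fun s => ciInf₂_le hf_iUnion s.1 s.2)

end Infimum

section Labelings

variable {I J K R : Type*} [Fintype J] [DecidableEq I] [DecidableEq K]

/-- The feasible values of the lower-bound selection problem: the total costs of the labelings of
the columns `J` that use each label `i` at least `ℓ i` times, where `d i j` is the cost of serving
column `j` by `i`. -/
def lowerBoundCosts [AddCommMonoid R] (d : I → J → R) (ℓ : I → ℕ) : Set R :=
  {s | ∃ τ : J → I, (∀ i, ℓ i ≤ #{j | τ j = i}) ∧ s = ∑ j, d (τ j) j}

/-- The feasible values of the exact-count selection problem: the total costs of the labelings of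
the columns `J` that use each label `i` exactly `n i` times, where `d i j` is the cost of serving
column `j` by `i`. -/
def exactCountCosts [AddCommMonoid R] (d : I → J → R) (n : I → ℕ) : Set R :=
  {s | ∃ τ : J → I, (∀ i, #{j | τ j = i} = n i) ∧ s = ∑ j, d (τ j) j}

lemma exists_exact_relabeling {f : I → K} (hf : Function.Injective f) {a : K}
    (ha : ∀ i, f i ≠ a) {ℓ : I → ℕ} {τ : J → I} (hτ : ∀ i, ℓ i ≤ #{j | τ j = i}) :
    ∃ τ' : J → K, (∀ i, #{j | τ' j = f i} = ℓ i) ∧ ∀ j, τ' j = f (τ j) ∨ τ' j = a := by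
  classical
  choose kept kept_subset card_kept using fun i => Finset.exists_subset_card_eq (hτ i)
  have label_of_mem_kept {i : I} {j : J} (hj : j ∈ kept i) : τ j = i := by
    simpa using kept_subset i hj
  refine ⟨fun j => if j ∈ kept (τ j) then f (τ j) else a, fun i => ?_, fun j => ?_⟩
  · suffices fiber_eq : ({j | (if j ∈ kept (τ j) then f (τ j) else a) = f i} : Finset J) = kept i by
      rw [fiber_eq, card_kept]
    ext j
    simp only [Finset.mem_filter_univ, ite_eq_iff, hf.eq_iff, (ha i).symm, and_false, or_false]
    refine ⟨fun ⟨hj, hi⟩ => hi ▸ hj, fun hj => ?_⟩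
    obtain rfl := label_of_mem_kept hj
    exact ⟨hj, rfl⟩
  · exact ite_eq_or_eq _ _ _

lemma card_fiber_eq_snoc_iff {p : ℕ} {ℓ : Fin p → ℕ} {τ : J → Fin (p + 1)} :
    (∀ k, #{j | τ j = k} = Fin.snoc (α := fun _ => ℕ) ℓ (Fintype.card J - ∑ i, ℓ i) k) ↔
      ∀ i : Fin p, #{j | τ j = i.castSucc} = ℓ i := by
  have sum_card_fibers :
      Fintype.card J = ∑ i : Fin p, #{j | τ j = i.castSucc} + #{j | τ j = Fin.last p} := by
    rw [← Fin.sum_univ_castSucc fun k => #{j | τ j = k}, ← Finset.card_univ]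
    exact Finset.card_eq_sum_card_fiberwise fun _ _ => Finset.mem_coe.2 (Finset.mem_univ _)
  simp only [Fin.forall_fin_succ', Fin.snoc_castSucc, Fin.snoc_last, and_iff_left_iff_imp]
  intro hτ
  simp only [sum_card_fibers, hτ, Nat.add_sub_cancel_left]

variable [AddCommMonoid R] [Preorder R] [IsOrderedAddMonoid R]

lemma exists_mem_exactCountCosts_le {p : ℕ} {d : Fin p → J → R} {d' : Fin (p + 1) → J → R}
    (hcast : ∀ i j, d' i.castSucc j ≤ d i j) (hlast : ∀ i j, d' (Fin.last p) j ≤ d i j)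
    {ℓ : Fin p → ℕ} {s : R} (hs : s ∈ lowerBoundCosts d ℓ) :
    ∃ t ∈ exactCountCosts d' (Fin.snoc ℓ (Fintype.card J - ∑ i, ℓ i)), t ≤ s := by
  obtain ⟨τ, hτ, rfl⟩ := hs
  obtain ⟨τ', card_fiber, hτ'⟩ :=
    exists_exact_relabeling (Fin.castSucc_injective p) Fin.castSucc_ne_last hτ
  refine ⟨_, ⟨τ', card_fiber_eq_snoc_iff.2 card_fiber, rfl⟩, Finset.sum_le_sum fun j _ => ?_⟩
  rcases hτ' j with h_kept | h_moved
  · exact h_kept ▸ hcast (τ j) j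
  · exact h_moved ▸ hlast (τ j) j

lemma exists_mem_lowerBoundCosts_le {d : I → J → R} {d' : K → J → R} {f : I → K}
    (hf : Function.Injective f) (hd : ∀ i j, d i j ≤ d' (f i) j)
    (hd' : ∀ k ∉ Set.range f, ∀ j, ∃ i, d i j ≤ d' k j)
    {n : K → ℕ} {s : R} (hs : s ∈ exactCountCosts d' n) :
    ∃ t ∈ lowerBoundCosts d (n ∘ f), t ≤ s := by
  obtain ⟨τ', hτ', rfl⟩ := hs
  have exists_label (j : J) : ∃ i, (∀ i', τ' j = f i' → i = i') ∧ d i j ≤ d' (τ' j) j := by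
    by_cases hj : τ' j ∈ Set.range f
    · obtain ⟨i, hi⟩ := hj
      exact ⟨i, fun i' hi' => hf (hi.trans hi'), hi ▸ hd i j⟩
    · obtain ⟨i, hi⟩ := hd' _ hj j
      exact ⟨i, fun i' hi' => (hj ⟨i', hi'.symm⟩).elim, hi⟩
  choose τ eq_of_eq cost_le using exists_label
  refine ⟨_, ⟨τ, fun i => ?_, rfl⟩, Finset.sum_le_sum fun j _ => cost_le j⟩
  rw [Function.comp_apply, ← hτ' (f i)]
  exact Finset.card_le_card (Finset.monotone_filter_right _ fun j _ => eq_of_eq j i)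

end Labelings

lemma sInf_lowerBoundCosts_eq_sInf_exactCountCosts {J R : Type*} [Fintype J] [AddCommMonoid R]
    [ConditionallyCompleteLinearOrder R] [IsOrderedAddMonoid R] {p : ℕ} [NeZero p]
    {d : Fin p → J → R} {d' : Fin (p + 1) → J → R} (hcast : ∀ i j, d' i.castSucc j = d i j)
    (hlast : ∀ j, d' (Fin.last p) j = ⨅ i, d i j) (ℓ : Fin p → ℕ) :
    sInf (lowerBoundCosts d ℓ) =
      sInf (exactCountCosts d' (Fin.snoc ℓ (Fintype.card J - ∑ i, ℓ i))) := by
  have last_le (i : Fin p) (j : J) : d' (Fin.last p) j ≤ d i j :=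
    (hlast j).trans_le (ciInf_le (Set.finite_range fun i => d i j).bddBelow i)
  have exists_le (k : Fin (p + 1)) (hk : k ∉ Set.range Fin.castSucc) (j : J) :
      ∃ i, d i j ≤ d' k j := by
    obtain rfl : k = Fin.last p := Fin.exists_castSucc_eq.not_left.1 hk
    obtain ⟨i, hi⟩ := exists_eq_ciInf_of_finite (f := fun i => d i j)
    exact ⟨i, (hi.trans (hlast j).symm).le⟩
  apply csInf_eq_csInf_of_forall_exists_le
  · exact fun s hs => exists_mem_exactCountCosts_le (fun i j => (hcast i j).le) last_le hs
  · intro s hs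
    simpa only [Fin.snoc_comp_castSucc] using exists_mem_lowerBoundCosts_le
      (Fin.castSucc_injective p) (fun i j => (hcast i j).ge) exists_le hs

theorem lower_bound_selection_eq_exact_count_with_concatenated_dictionary_general
    {J α R : Type*} [Fintype J] [AddCommMonoid R] [ConditionallyCompleteLinearOrder R]
    [IsOrderedAddMonoid R] {p : ℕ} [NeZero p] {ι : Fin p → Type*} [∀ i, Nonempty (ι i)]
    (D : (i : Fin p) → ι i → α) (c : J → α → R)
    (hc : ∀ i j, BddBelow (Set.range fun k => c j (D i k)))
    {d : Fin p → J → R} (hd : ∀ i j, d i j = ⨅ k, c j (D i k))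
    {d' : Fin (p + 1) → J → R} (hcast : ∀ i j, d' i.castSucc j = d i j)
    (hlast : ∀ j, d' (Fin.last p) j = ⨅ s : Σ i, ι i, c j (D s.1 s.2)) (ℓ : Fin p → ℕ) :
    sInf (lowerBoundCosts d ℓ) =
      sInf (exactCountCosts d' (Fin.snoc ℓ (Fintype.card J - ∑ i, ℓ i))) := by
  refine sInf_lowerBoundCosts_eq_sInf_exactCountCosts hcast (fun j => ?_) ℓ
  simp only [hlast, hd]
  exact ciInf_sigma (bddBelow_range_sigma fun i => hc i j)

/-- The lower-bound variant of the multiple-dictionary selection problem (at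
least `ℓ i` columns served by dictionary `D i`) is equivalent to an exact-count
instance obtained by adjoining a `(p+1)`-st dictionary, the concatenation of
`D 1, …, D p` (modeled by the sigma type `Σ i, ι i`), with exact counts
`ℓ 1, …, ℓ p` and `r - ∑ i, ℓ i` for the concatenated dictionary. -/
theorem lower_bound_selection_eq_exact_count_with_concatenated_dictionary
    (m p r : ℕ) (hp : 0 < p) (hr : 0 < r)
    (ι : Fin p → Type) [∀ i, Fintype (ι i)] [∀ i, Nonempty (ι i)]
    (D : (i : Fin p) → ι i → (Fin m → ℝ))
    (A : Fin r → (Fin m → ℝ))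
    (c : Fin r → (Fin m → ℝ) → ℝ)
    (dcost : Fin p → Fin r → ℝ)
    (hdcost : ∀ (i : Fin p) (j : Fin r), dcost i j = ⨅ k : ι i, c j (D i k))
    (dcost' : Fin (p + 1) → Fin r → ℝ)
    (hdcost'_cast : ∀ (i : Fin p) (j : Fin r), dcost' i.castSucc j = dcost i j)
    (hdcost'_last : ∀ j : Fin r,
      dcost' (Fin.last p) j = ⨅ s : Σ i : Fin p, ι i, c j (D s.1 s.2))
    (ℓ : Fin p → ℕ) (hℓ : ∑ i : Fin p, ℓ i ≤ r) :
    sInf {s : ℝ | ∃ τ : Fin r → Fin p,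
        (∀ i : Fin p,
          ℓ i ≤ (Finset.univ.filter (fun j : Fin r => τ j = i)).card) ∧
        s = ∑ j : Fin r, dcost (τ j) j} =
      sInf {s : ℝ | ∃ τ' : Fin r → Fin (p + 1),
        (∀ i : Fin p,
          (Finset.univ.filter (fun j : Fin r => τ' j = i.castSucc)).card = ℓ i) ∧
        (Finset.univ.filter (fun j : Fin r => τ' j = Fin.last p)).card
          = r - ∑ i : Fin p, ℓ i ∧
        s = ∑ j : Fin r, dcost' (τ' j) j} := by
  have : NeZero p := ⟨hp.ne'⟩
  simpa [lowerBoundCosts, exactCountCosts, Fin.forall_fin_succ', and_assoc] using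
    lower_bound_selection_eq_exact_count_with_concatenated_dictionary_general D c
      (fun _ _ => (Set.finite_range _).bddBelow) hdcost hdcost'_cast hdcost'_last ℓ
end

section
/- Let D_1, …, D_p be dictionaries whose atoms all have unit Euclidean norm, and let A_1, …, A_r ∈ ℝ^m be columns all having the same Euclidean norm ρ > 0. Define the cosine cost d_cos(i, j) = min_k (1 − ⟨A_j, D_i(:,k)⟩/(‖A_j‖₂‖D_i(:,k)‖₂)) and the least-squares cost d_ls(i, j) = min_k ‖A_j − D_i(:,k)‖₂². Then d_ls(i, j) = 2ρ · d_cos(i, j) + (ρ − 1)² for all i, j, and consequently, over any feasibility set S of labelings τ : {1, …, r} → {1, …, p}, the assignment problem with weights d_cos and the assignment problem with weights d_ls have exactly the same sets of optimal labelings. In this sense, the normalized inner product, plugged into the assignment problem, provides the best solution for the selected index sets in the least-squares sense when atoms are normalized. -/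
open RealInnerProductSpace

/-!
By the law of cosines, `‖x - y‖² = 2‖x‖‖y‖ · dist(x, y) + (‖x‖ - ‖y‖)²` for the
normalized-inner-product distance `dist`. Once the norms of `x` and `y` are fixed, this is an
increasing affine function of `dist(x, y)` whose coefficients depend neither on the atom nor on the
dictionary, so it passes through the infimum over atoms, and summing over columns rescales the
objective of the assignment problem by a positive factor and shifts it by a constant.
-/

section CosineDistance

variable {E κ : Type*} [NormedAddCommGroup E] [InnerProductSpace ℝ E]

/-- The normalized-inner-product distance. It is `1` if `x` or `y` vanishes, since `t / 0 = 0`. -/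
noncomputable def cosineDist (x y : E) : ℝ :=
  1 - ⟪x, y⟫ / (‖x‖ * ‖y‖)

/-- The cosine cost `d_cos` of representing `x` by a nearest atom of the dictionary `D`. The minimum
over atoms is encoded as an infimum, so that `D` may be infinite. -/
noncomputable def cosineCost (D : κ → E) (x : E) : ℝ :=
  ⨅ k, cosineDist x (D k)

/-- The least-squares cost `d_ls` of representing `x` by a nearest atom of the dictionary `D`, again
encoded as an infimum. -/
noncomputable def leastSquaresCost (D : κ → E) (x : E) : ℝ :=
  ⨅ k, ‖x - D k‖ ^ 2

theorem cosineDist_nonneg (x y : E) : 0 ≤ cosineDist x y :=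
  sub_nonneg.2 (le_of_abs_le (abs_real_inner_div_norm_mul_norm_le_one x y))

theorem norm_mul_norm_mul_cosineDist (x y : E) :
    ‖x‖ * ‖y‖ * cosineDist x y = ‖x‖ * ‖y‖ - ⟪x, y⟫ := by
  rw [cosineDist, ← InnerProductGeometry.cos_angle, mul_one_sub, mul_comm (‖x‖ * ‖y‖) (Real.cos _),
    InnerProductGeometry.cos_angle_mul_norm_mul_norm]

theorem norm_sub_sq_eq_cosineDist (x y : E) :
    ‖x - y‖ ^ 2 = 2 * ‖x‖ * ‖y‖ * cosineDist x y + (‖x‖ - ‖y‖) ^ 2 := by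
  linear_combination norm_sub_sq_real x y - 2 * norm_mul_norm_mul_cosineDist x y

theorem leastSquaresCost_eq_cosineCost [Nonempty κ] {D : κ → E} {x : E} {ρ σ : ℝ}
    (hD : ∀ k, ‖D k‖ = σ) (hx : ‖x‖ = ρ) :
    leastSquaresCost D x = 2 * ρ * σ * cosineCost D x + (ρ - σ) ^ 2 := by
  have hρ : 0 ≤ ρ := hx ▸ norm_nonneg x
  have hσ : 0 ≤ σ := hD (Classical.arbitrary κ) ▸ norm_nonneg _
  have bddBelow : BddBelow (Set.range fun k ↦ 2 * ρ * σ * cosineDist x (D k)) :=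
    ⟨0, Set.forall_mem_range.2 fun k ↦ mul_nonneg (by positivity) (cosineDist_nonneg x (D k))⟩
  calc
    leastSquaresCost D x = ⨅ k, (2 * ρ * σ * cosineDist x (D k) + (ρ - σ) ^ 2) :=
      iInf_congr fun k ↦ by rw [norm_sub_sq_eq_cosineDist, hD, hx]
    _ = (⨅ k, 2 * ρ * σ * cosineDist x (D k)) + (ρ - σ) ^ 2 := (ciInf_add bddBelow _).symm
    _ = 2 * ρ * σ * cosineCost D x + (ρ - σ) ^ 2 := by
      rw [cosineCost, Real.mul_iInf_of_nonneg (by positivity)]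

end CosineDistance

section Assignment

variable {α β R : Type*} [Fintype β]

/-- The objective of the assignment problem with weights `d`, at the labeling `τ`; the optimal
labelings over a feasibility set `S` are the `τ ∈ S` with `IsMinOn (assignmentCost d) S τ`. -/
def assignmentCost [AddCommMonoid R] (d : α → β → R) (τ : β → α) : R :=
  ∑ j, d (τ j) j

theorem assignmentCost_of_eq_mul_add [NonUnitalNonAssocSemiring R] {d d' : α → β → R} {a : R}
    {b : β → R} (h : ∀ i j, d' i j = a * d i j + b j) (τ : β → α) :
    assignmentCost d' τ = a * assignmentCost d τ + ∑ j, b j := by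
  simp only [assignmentCost, h, Finset.sum_add_distrib, Finset.mul_sum]

theorem isMinOn_assignmentCost_iff_of_eq_mul_add [Semiring R] [LinearOrder R]
    [IsStrictOrderedRing R] {d d' : α → β → R} {a : R} {b : β → R} (ha : 0 < a)
    (h : ∀ i j, d' i j = a * d i j + b j) (S : Set (β → α)) (τ : β → α) :
    IsMinOn (assignmentCost d) S τ ↔ IsMinOn (assignmentCost d') S τ := by
  simp only [isMinOn_iff, assignmentCost_of_eq_mul_add h, add_le_add_iff_right,
    mul_le_mul_iff_right₀ ha]

end Assignment

theorem cosine_cost_vs_least_squares_cost_general {α β E : Type*} [Fintype β]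
    [NormedAddCommGroup E] [InnerProductSpace ℝ E] {κ : α → Type*} [∀ i, Nonempty (κ i)]
    {D : (i : α) → κ i → E} {A : β → E} {ρ σ : ℝ} (hσ : 0 < σ) (hD : ∀ i k, ‖D i k‖ = σ)
    (hρ : 0 < ρ) (hA : ∀ j, ‖A j‖ = ρ) {dcos dls : α → β → ℝ}
    (hdcos : ∀ i j, dcos i j = cosineCost (D i) (A j))
    (hdls : ∀ i j, dls i j = leastSquaresCost (D i) (A j)) :
    (∀ i j, dls i j = 2 * ρ * σ * dcos i j + (ρ - σ) ^ 2) ∧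
      ∀ (S : Set (β → α)) (τ : β → α),
        IsMinOn (assignmentCost dcos) S τ ↔ IsMinOn (assignmentCost dls) S τ := by
  have cost_eq : ∀ i j, dls i j = 2 * ρ * σ * dcos i j + (ρ - σ) ^ 2 := fun i j ↦ by
    rw [hdls, hdcos, leastSquaresCost_eq_cosineCost (hD i) (hA j)]
  exact ⟨cost_eq, isMinOn_assignmentCost_iff_of_eq_mul_add (by positivity) cost_eq⟩

/-- For unit-norm atoms and columns of common norm `ρ > 0`, the least-squares
nearest-atom cost and the cosine (normalized-inner-product) nearest-atom cost
are related by `d_ls i j = 2ρ · d_cos i j + (ρ - 1)²`; consequently, over any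
feasibility set of labelings, the assignment problems with weights `d_cos` and
`d_ls` have exactly the same optimal labelings. -/
theorem cosine_cost_vs_least_squares_cost
    (m p r : ℕ)
    (ι : Fin p → Type) [∀ i, Fintype (ι i)] [∀ i, Nonempty (ι i)]
    (D : (i : Fin p) → ι i → EuclideanSpace ℝ (Fin m))
    (hD : ∀ (i : Fin p) (k : ι i), ‖D i k‖ = 1)
    (A : Fin r → EuclideanSpace ℝ (Fin m))
    (ρ : ℝ) (hρ : 0 < ρ) (hA : ∀ j : Fin r, ‖A j‖ = ρ)
    (dcos dls : Fin p → Fin r → ℝ)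
    (hdcos : ∀ (i : Fin p) (j : Fin r),
      dcos i j = ⨅ k : ι i, (1 - ⟪A j, D i k⟫ / (‖A j‖ * ‖D i k‖)))
    (hdls : ∀ (i : Fin p) (j : Fin r),
      dls i j = ⨅ k : ι i, ‖A j - D i k‖ ^ 2) :
    (∀ (i : Fin p) (j : Fin r), dls i j = 2 * ρ * dcos i j + (ρ - 1) ^ 2) ∧
    (∀ (S : Set (Fin r → Fin p)) (τ : Fin r → Fin p), τ ∈ S →
      ((∀ τ' ∈ S, ∑ j : Fin r, dcos (τ j) j ≤ ∑ j : Fin r, dcos (τ' j) j) ↔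
        (∀ τ' ∈ S, ∑ j : Fin r, dls (τ j) j ≤ ∑ j : Fin r, dls (τ' j) j))) := by
  obtain ⟨cost_eq, optimal_iff⟩ :=
    cosine_cost_vs_least_squares_cost_general one_pos hD hρ hA hdcos hdls
  exact ⟨by simpa only [mul_one] using cost_eq, fun S τ _ ↦ optimal_iff S τ⟩
end
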